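/- Let E be a finite-dimensional real inner product space and C₁, …, C_m ⊆ E compact convex sets each containing 0 in its interior, with gauges G_i = gauge C_i. For each i let P_i : (0,∞) × E → E be the map such that P_i(θ, y) is the (unique) minimizer of z ↦ (1/2)‖z − y‖² + θ·G_i(z). Then there exists a constant L > 0 such that for all θ, θ' ∈ (0,∞)^m and all y ∈ E, ‖ P₁(θ₁, P₂(θ₂, …, P_m(θ_m, y)…)) − P₁(θ'₁, P₂(θ'₂, …, P_m(θ'_m, y)…)) ‖ ≤ √m · L · ‖θ − θ'‖, where ‖θ − θ'‖ is the Euclidean norm on ℝ^m. -/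

import Mathlib

noncomputable section

/-- Composition `P₁(θ₁, P₂(θ₂, …, P_m(θ_m, y)…))` of a family of parametrized maps. -/
def composeProx {E : Type*} {m : ℕ} (Pr : Fin m → ℝ → E → E) (θ : Fin m → ℝ) : E → E :=
  (List.ofFn fun i => Pr i (θ i)).foldr (· ∘ ·) id

lemma prox_vi_aux {c d : ℝ} (hd : 0 ≤ d) (h : ∀ t : ℝ, 0 < t → t ≤ 1 → 0 ≤ c + t * d) : 0 ≤ c := by
  by_contra hc
  push Not at hc
  have hpos : 0 < 2 * (d - c) := by linarith
  have hne : d - c ≠ 0 := ne_of_gt (by linarith)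
  have h1 := h (-c / (2 * (d - c))) (div_pos (by linarith) hpos)
    ((div_le_one hpos).2 (by linarith))
  have h2 : c + -c / (2 * (d - c)) * d = c * (d - 2 * c) / (2 * (d - c)) := by
    field_simp
    ring
  rw [h2] at h1
  have h3 : c * (d - 2 * c) / (2 * (d - c)) < 0 :=
    div_neg_of_neg_of_pos (mul_neg_of_neg_of_pos hc (by linarith)) hpos
  linarith

/-- Variational inequality for the proximal point of a gauge. -/
lemma prox_vi {E : Type*} [NormedAddCommGroup E] [InnerProductSpace ℝ E] {C : Set E}
    (hC : Convex ℝ C) (h0 : C ∈ nhds (0 : E)) {θ : ℝ} (hθ : 0 < θ) {p y : E}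
    (hp : ∀ z : E, (1 / 2) * ‖p - y‖ ^ 2 + θ * gauge C p
      ≤ (1 / 2) * ‖z - y‖ ^ 2 + θ * gauge C z) (z : E) :
    0 ≤ inner ℝ (p - y) (z - p) + θ * (gauge C z - gauge C p) := by
  refine prox_vi_aux (d := (1 / 2) * ‖z - p‖ ^ 2) (by positivity) ?_
  intro t ht ht1
  have h1 := hp ((1 - t) • p + t • z)
  have hg : gauge C ((1 - t) • p + t • z) ≤ (1 - t) * gauge C p + t * gauge C z := by
    refine (gauge_add_le hC (absorbent_nhds_zero h0) _ _).trans ?_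
    rw [gauge_smul_of_nonneg (by linarith), gauge_smul_of_nonneg ht.le, smul_eq_mul, smul_eq_mul]
  have he : (1 - t) • p + t • z - y = (p - y) + t • (z - p) := by module
  rw [he, norm_add_sq_real, inner_smul_right, norm_smul, Real.norm_of_nonneg ht.le] at h1
  have h2 := mul_le_mul_of_nonneg_left hg hθ.le
  have h3 : 0 ≤ t * (inner ℝ (p - y) (z - p) + θ * (gauge C z - gauge C p)
      + t * ((1 / 2) * ‖z - p‖ ^ 2)) := by nlinarith
  exact nonneg_of_mul_nonneg_right h3 ht

lemma prox_lip {E : Type*} [NormedAddCommGroup E] [InnerProductSpace ℝ E] {C : Set E}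
    (hC : Convex ℝ C) (h0 : C ∈ nhds (0 : E)) : ∃ K : ℝ, 0 ≤ K ∧
    ∀ θ θ' : ℝ, 0 < θ → 0 < θ' → ∀ p q y y' : E,
    (∀ z : E, (1 / 2) * ‖p - y‖ ^ 2 + θ * gauge C p
      ≤ (1 / 2) * ‖z - y‖ ^ 2 + θ * gauge C z) →
    (∀ z : E, (1 / 2) * ‖q - y'‖ ^ 2 + θ' * gauge C q
      ≤ (1 / 2) * ‖z - y'‖ ^ 2 + θ' * gauge C z) →
    ‖p - q‖ ≤ ‖y - y'‖ + K * |θ - θ'| := by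
  obtain ⟨K, hK⟩ := hC.lipschitz_gauge h0
  refine ⟨K, K.2, ?_⟩
  intro θ θ' hθ hθ' p q y y' hp hq
  have h1 := prox_vi hC h0 hθ hp q
  have h2 := prox_vi hC h0 hθ' hq p
  have h3 : |gauge C p - gauge C q| ≤ K * ‖p - q‖ := by
    have := hK.dist_le_mul p q
    rwa [Real.dist_eq, dist_eq_norm] at this
  have h4 : (θ' - θ) * (gauge C p - gauge C q) ≤ |θ - θ'| * (K * ‖p - q‖) := by
    refine (le_abs_self _).trans ?_
    rw [abs_mul, abs_sub_comm θ' θ]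
    exact mul_le_mul_of_nonneg_left h3 (abs_nonneg _)
  have h5 := real_inner_le_norm (y - y') (p - q)
  have h6 : inner ℝ (p - y) (q - p) + inner ℝ (q - y') (p - q)
      = inner ℝ (y - y') (p - q) - ‖p - q‖ ^ 2 := by
    rw [← real_inner_self_eq_norm_sq, ← neg_sub p q, inner_neg_right, ← sub_eq_neg_add,
      ← inner_sub_left, ← inner_sub_left]
    congr 1
    abel
  have h7 : ‖p - q‖ * ‖p - q‖ ≤ (‖y - y'‖ + K * |θ - θ'|) * ‖p - q‖ := by nlinarith
  rcases (norm_nonneg (p - q)).eq_or_lt with h | h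
  · rw [← h]; positivity
  · exact le_of_mul_le_mul_right h7 h

lemma composeProx_lip {E : Type*} [NormedAddCommGroup E] {L : ℝ} : ∀ {m : ℕ}
    (Pr : Fin m → ℝ → E → E)
    (_ : ∀ i, ∀ θ θ' : ℝ, 0 < θ → 0 < θ' → ∀ y y' : E,
      ‖Pr i θ y - Pr i θ' y'‖ ≤ ‖y - y'‖ + L * |θ - θ'|)
    (θ θ' : Fin m → ℝ) (_ : ∀ i, 0 < θ i) (_ : ∀ i, 0 < θ' i) (y : E),
    ‖composeProx Pr θ y - composeProx Pr θ' y‖ ≤ L * ∑ i, |θ i - θ' i| := by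
  intro m
  induction m with
  | zero => intro Pr _ θ θ' _ _ y; simp [composeProx]
  | succ m ih =>
    intro Pr h θ θ' hθ hθ' y
    have key : ∀ τ : Fin (m + 1) → ℝ, composeProx Pr τ y
        = Pr 0 (τ 0) (composeProx (fun i => Pr i.succ) (fun i => τ i.succ) y) := by
      intro τ
      simp [composeProx, List.ofFn_succ]
    rw [key, key, Fin.sum_univ_succ]
    have h1 := h 0 (θ 0) (θ' 0) (hθ 0) (hθ' 0)
      (composeProx (fun i => Pr i.succ) (fun i => θ i.succ) y)
      (composeProx (fun i => Pr i.succ) (fun i => θ' i.succ) y)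
    have h2 := ih (fun i => Pr i.succ) (fun i => h i.succ) (fun i => θ i.succ)
      (fun i => θ' i.succ) (fun i => hθ _) (fun i => hθ' _) y
    linarith

/-- **Lipschitz continuity in the parameters of composed proximal operators of gauges**
(Corollary).  Let `C₁, …, C_m` be compact convex sets containing `0` in their interior,
with gauges `G_i = gauge (C i)`, and let `P_i(θ, ·)` be the proximal operator of `θ G_i`,
i.e. `P_i(θ, y)` minimizes `z ↦ (1/2)‖z - y‖² + θ G_i(z)`.  Then there is `L > 0` such
that for all `θ, θ' ∈ (0,∞)^m` and all `y`,
`‖P₁(θ₁, …, P_m(θ_m, y)…) - P₁(θ'₁, …, P_m(θ'_m, y)…)‖ ≤ √m · L · ‖θ - θ'‖`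
with the Euclidean norm on `ℝ^m`. -/
theorem composed_prox_gauge_lipschitz_in_theta
    {E : Type*} [NormedAddCommGroup E] [InnerProductSpace ℝ E] [FiniteDimensional ℝ E]
    {m : ℕ} (C : Fin m → Set E)
    (hconv : ∀ i, Convex ℝ (C i)) (hcomp : ∀ i, IsCompact (C i))
    (h0 : ∀ i, 0 ∈ interior (C i))
    (Pr : Fin m → ℝ → E → E)
    (hPr : ∀ i : Fin m, ∀ θ : ℝ, 0 < θ → ∀ y z : E,
      (1 / 2) * ‖Pr i θ y - y‖ ^ 2 + θ * gauge (C i) (Pr i θ y)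
        ≤ (1 / 2) * ‖z - y‖ ^ 2 + θ * gauge (C i) z) :
    ∃ L : ℝ, 0 < L ∧ ∀ θ θ' : EuclideanSpace ℝ (Fin m),
      (∀ i, 0 < θ i) → (∀ i, 0 < θ' i) → ∀ y : E,
        ‖composeProx Pr (fun i => θ i) y - composeProx Pr (fun i => θ' i) y‖
          ≤ Real.sqrt m * L * ‖θ - θ'‖ := by
  have hn : ∀ i, C i ∈ nhds (0 : E) := fun i => mem_interior_iff_mem_nhds.1 (h0 i)
  choose K hK0 hK using fun i => prox_lip (hconv i) (hn i)
  have hS : 0 ≤ ∑ i, K i := Finset.sum_nonneg fun i _ => hK0 i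
  refine ⟨1 + ∑ i, K i, by linarith, ?_⟩
  intro θ θ' hθ hθ' y
  have h1 := composeProx_lip (L := 1 + ∑ i, K i) Pr (by
    intro i s s' hs hs' y y'
    refine (hK i s s' hs hs' _ _ y y' (hPr i s hs y) (hPr i s' hs' y')).trans ?_
    have : K i ≤ ∑ i, K i := Finset.single_le_sum (fun i _ => hK0 i) (Finset.mem_univ i)
    gcongr
    linarith) (fun i => θ i) (fun i => θ' i) hθ hθ' y
  refine h1.trans ?_
  have h2 : ∑ i, |θ i - θ' i| ≤ Real.sqrt m * ‖θ - θ'‖ := by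
    rw [EuclideanSpace.norm_eq, ← Real.sqrt_mul (Nat.cast_nonneg m)]
    apply Real.le_sqrt_of_sq_le
    have := sq_sum_le_card_mul_sum_sq (s := Finset.univ) (f := fun i => |θ i - θ' i|)
    simpa using this
  calc _ ≤ (1 + ∑ i, K i) * (Real.sqrt m * ‖θ - θ'‖) :=
        mul_le_mul_of_nonneg_left h2 (by linarith)
    _ = _ := by ring
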